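/- arXiv:2510.19961 — 3 statements merged into one kernel-verified Lean document; each statement's English description precedes it below -/
import Mathlib

section
/- Let (Q,·,e) be a loop with central squares, i.e., x·x ∈ Z(Q) for all x ∈ Q (so Q is power-associative and every element x has a two-sided inverse x^{-1}). Then for all x, y ∈ Q: (x·x)·(y·y) = (x·y)·((x^{-1}·y^{-1})^{-1}). -/
/-- A loop `(Q, ·, e)`: a quasigroup with two-sided identity, presented with
explicit left division `ldiv a b = a \ b` and right division `rdiv b a = b / a`. -/
structure LoopStr (Q : Type*) where
  mul : Q → Q → Q
  e : Q
  ldiv : Q → Q → Q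
  rdiv : Q → Q → Q
  one_mul : ∀ x, mul e x = x
  mul_one : ∀ x, mul x e = x
  mul_ldiv : ∀ a b, mul a (ldiv a b) = b
  ldiv_mul : ∀ a b, ldiv a (mul a b) = b
  rdiv_mul : ∀ a b, mul (rdiv b a) a = b
  mul_rdiv : ∀ a b, rdiv (mul b a) a = b

namespace LoopStr

variable {Q : Type*} (S : LoopStr Q)

/-- The left inverse `x^ℓ = e / x`. -/
def linv (x : Q) : Q := S.rdiv S.e x

/-- The right inverse `x^r = x \ e`. -/
def rinv (x : Q) : Q := S.ldiv x S.e

/-- The left nucleus. -/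
def lnuc : Set Q := {a | ∀ x y, S.mul (S.mul a x) y = S.mul a (S.mul x y)}

/-- The middle nucleus. -/
def mnuc : Set Q := {a | ∀ x y, S.mul (S.mul x a) y = S.mul x (S.mul a y)}

/-- The right nucleus. -/
def rnuc : Set Q := {a | ∀ x y, S.mul (S.mul x y) a = S.mul x (S.mul y a)}

/-- The commutant `C(Q)`. -/
def commutant : Set Q := {a | ∀ x, S.mul a x = S.mul x a}

/-- The center `Z(Q) = C(Q) ∩ Nuc_ℓ ∩ Nuc_m ∩ Nuc_r`. -/
def center : Set Q := S.commutant ∩ S.lnuc ∩ S.mnuc ∩ S.rnuc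

/-- The left translation `L_a` as a map. -/
def leftMul (a : Q) : Q → Q := fun x => S.mul a x

/-- The left translation `L_a` as a permutation of `Q`. -/
def leftPerm (a : Q) : Equiv.Perm Q :=
  ⟨fun x => S.mul a x, fun x => S.ldiv a x, S.ldiv_mul a, S.mul_ldiv a⟩

/-- The right translation `R_a` as a permutation of `Q`. -/
def rightPerm (a : Q) : Equiv.Perm Q :=
  ⟨fun x => S.mul x a, fun x => S.rdiv x a, fun x => S.mul_rdiv a x, fun x => S.rdiv_mul a x⟩

/-- The multiplication group `Mlt(Q) = ⟨L_x, R_x : x ∈ Q⟩ ≤ Sym(Q)`. -/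
def Mlt : Subgroup (Equiv.Perm Q) :=
  Subgroup.closure (Set.range S.leftPerm ∪ Set.range S.rightPerm)

/-- `x^n = L_x^n(e)` for natural `n`. -/
def npow (a : Q) (n : ℕ) : Q := (S.leftPerm a ^ n) S.e

/-- `x^n = L_x^n(e)` for integer `n`. -/
def zpow (a : Q) (n : ℤ) : Q := (S.leftPerm a ^ n) S.e

/-- The order of an element: the least `n > 0` with `x^n = e` (or `0` if none exists). -/
noncomputable def lorder (a : Q) : ℕ := sInf {n : ℕ | 0 < n ∧ S.npow a n = S.e}

/-- A subloop: contains `e`, closed under multiplication and both divisions. -/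
def IsSubloop (N : Set Q) : Prop :=
  S.e ∈ N ∧ (∀ a ∈ N, ∀ b ∈ N, S.mul a b ∈ N) ∧
    (∀ a ∈ N, ∀ b ∈ N, S.ldiv a b ∈ N) ∧ (∀ a ∈ N, ∀ b ∈ N, S.rdiv a b ∈ N)

/-- A normal subloop: a subloop with `xN = Nx`, `(xN)y = x(Ny)`, `N(xy) = (Nx)y`
elementwise as sets. -/
def IsNormalSubloop (N : Set Q) : Prop :=
  S.IsSubloop N ∧
  (∀ x : Q, (fun a => S.mul x a) '' N = (fun a => S.mul a x) '' N) ∧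
  (∀ x y : Q, (fun a => S.mul (S.mul x a) y) '' N = (fun a => S.mul x (S.mul a y)) '' N) ∧
  (∀ x y : Q, (fun a => S.mul a (S.mul x y)) '' N = (fun a => S.mul (S.mul a x) y) '' N)

/-- A loop is simple if its only normal subloops are `{e}` and `Q`. -/
def IsSimple : Prop :=
  ∀ N : Set Q, S.IsNormalSubloop N → N = {S.e} ∨ N = Set.univ

lemma mul_rinv (x : Q) : S.mul x (S.rinv x) = S.e := S.mul_ldiv x S.e

lemma linv_mul (x : Q) : S.mul (S.linv x) x = S.e := S.rdiv_mul x S.e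

lemma linv_rinv (x : Q) : S.linv (S.rinv x) = x := by
  have h := S.mul_rdiv (S.rinv x) x
  rw [S.mul_rinv] at h
  exact h

lemma rinv_linv (x : Q) : S.rinv (S.linv x) = x := by
  have h := S.ldiv_mul (S.linv x) x
  rw [S.linv_mul] at h
  exact h

lemma rinv_e : S.rinv S.e = S.e := by
  have h := S.ldiv_mul S.e S.e
  rw [S.one_mul] at h
  exact h

lemma rdiv_e (x : Q) : S.rdiv x S.e = x := by
  have h := S.mul_rdiv S.e x
  rw [S.mul_one] at h
  exact h

/-- The principal right isostrophe `(Q, ∘)` of `(Q, ·)`, with `x ∘ y = x / (y^r)`,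
right division `x // y = x·(y^r)` and left division `x \\ y = (y \ x)^ℓ`. -/
def iso : LoopStr Q where
  mul x y := S.rdiv x (S.rinv y)
  e := S.e
  ldiv x y := S.linv (S.ldiv y x)
  rdiv x y := S.mul x (S.rinv y)
  one_mul x := S.linv_rinv x
  mul_one x := by
    show S.rdiv x (S.rinv S.e) = x
    rw [S.rinv_e, S.rdiv_e]
  mul_ldiv a b := by
    show S.rdiv a (S.rinv (S.linv (S.ldiv b a))) = b
    rw [S.rinv_linv]
    have h := S.mul_rdiv (S.ldiv b a) b
    rw [S.mul_ldiv] at h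
    exact h
  ldiv_mul a b := by
    show S.linv (S.ldiv (S.rdiv a (S.rinv b)) a) = b
    have h := S.ldiv_mul (S.rdiv a (S.rinv b)) (S.rinv b)
    rw [S.rdiv_mul] at h
    rw [h, S.linv_rinv]
  rdiv_mul a b := by
    show S.rdiv (S.mul b (S.rinv a)) (S.rinv a) = b
    exact S.mul_rdiv (S.rinv a) b
  mul_rdiv a b := by
    show S.mul (S.rdiv b (S.rinv a)) (S.rinv a) = b
    exact S.rdiv_mul (S.rinv a) b

end LoopStr

/-!
When `x²` is central, cancelling `x` from `x·(x⁻¹·x²) = x·x` gives `x = x²·x⁻¹`. Central factors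
can be collected in front, so `x·y = (x²·x⁻¹)·(y²·y⁻¹) = (x²·y²)·(x⁻¹·y⁻¹)`; multiplying on the
right by the inverse of `x⁻¹·y⁻¹` leaves `x²·y²`, because `x²·y²` is left nuclear.
-/

namespace LoopStr

variable {Q : Type*} (S : LoopStr Q)

lemma mul_right_injective (a : Q) : Function.Injective (S.mul a) :=
  Function.LeftInverse.injective (S.ldiv_mul a)

variable {S}

lemma mul_mem_lnuc {a b : Q} (ha : a ∈ S.lnuc) (hb : b ∈ S.lnuc) : S.mul a b ∈ S.lnuc := by
  intro x y
  rw [ha b x, ha (S.mul b x) y, hb x y, ha b (S.mul x y)]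

lemma mul_mul_rinv_of_mem_lnuc {a : Q} (ha : a ∈ S.lnuc) (x : Q) :
    S.mul (S.mul a x) (S.rinv x) = a := by
  rw [ha, S.mul_rinv, S.mul_one]

lemma center_subset_lnuc : S.center ⊆ S.lnuc := fun _ ha => ha.1.1.2

lemma mul_mul_mul_comm_of_mem_lnuc_of_mem_center {a b : Q} (ha : a ∈ S.lnuc)
    (hb : b ∈ S.center) (x y : Q) :
    S.mul (S.mul a x) (S.mul b y) = S.mul (S.mul a b) (S.mul x y) := by
  obtain ⟨⟨⟨b_comm, b_left⟩, b_mid⟩, -⟩ := hb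
  calc S.mul (S.mul a x) (S.mul b y)
      = S.mul a (S.mul x (S.mul b y)) := ha _ _
    _ = S.mul a (S.mul (S.mul x b) y) := by rw [b_mid]
    _ = S.mul a (S.mul (S.mul b x) y) := by rw [b_comm]
    _ = S.mul a (S.mul b (S.mul x y)) := by rw [b_left]
    _ = S.mul (S.mul a b) (S.mul x y) := (ha _ _).symm

lemma rinv_mul_sq_of_sq_mem_rnuc {x : Q} (hx : S.mul x x ∈ S.rnuc) :
    S.mul (S.rinv x) (S.mul x x) = x := by
  apply S.mul_right_injective x
  rw [← hx, S.mul_rinv, S.one_mul]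

lemma sq_mul_rinv_of_sq_mem_center {x : Q} (hx : S.mul x x ∈ S.center) :
    S.mul (S.mul x x) (S.rinv x) = x := by
  obtain ⟨⟨⟨sq_comm, -⟩, -⟩, sq_right⟩ := hx
  rw [sq_comm, rinv_mul_sq_of_sq_mem_rnuc sq_right]

lemma rinv_mul_of_sq_mem_center {x : Q} (hx : S.mul x x ∈ S.center) :
    S.mul (S.rinv x) x = S.e := by
  apply S.mul_right_injective (S.mul x x)
  rw [← center_subset_lnuc hx, sq_mul_rinv_of_sq_mem_center hx, S.mul_one]

end LoopStr

open LoopStr in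
theorem central_squares_identity_general {Q : Type*} {S : LoopStr Q} {x y : Q}
    (hx : S.mul x x ∈ S.center) (hy : S.mul y y ∈ S.center) :
    S.mul (S.mul x x) (S.mul y y) =
      S.mul (S.mul x y) (S.rinv (S.mul (S.rinv x) (S.rinv y))) := by
  have hx_left := center_subset_lnuc hx
  have mul_eq : S.mul x y =
      S.mul (S.mul (S.mul x x) (S.mul y y)) (S.mul (S.rinv x) (S.rinv y)) := by
    rw [← mul_mul_mul_comm_of_mem_lnuc_of_mem_center hx_left hy,
      sq_mul_rinv_of_sq_mem_center hx, sq_mul_rinv_of_sq_mem_center hy]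
  rw [mul_eq, mul_mul_rinv_of_mem_lnuc (mul_mem_lnuc hx_left (center_subset_lnuc hy))]

/-- In a loop with central squares, every element has a two-sided
inverse `x⁻¹` (here realized as `x^r`), and
`(x·x)·(y·y) = (x·y)·((x⁻¹·y⁻¹)⁻¹)` for all `x, y`. -/
theorem central_squares_identity {Q : Type*} (S : LoopStr Q)
    (h : ∀ x : Q, S.mul x x ∈ S.center) :
    (∀ x : Q, S.mul x (S.rinv x) = S.e ∧ S.mul (S.rinv x) x = S.e) ∧
    (∀ x y : Q, S.mul (S.mul x x) (S.mul y y) =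
      S.mul (S.mul x y) (S.rinv (S.mul (S.rinv x) (S.rinv y)))) :=
  ⟨fun x => ⟨S.mul_rinv x, LoopStr.rinv_mul_of_sq_mem_center (h x)⟩,
    fun x y => central_squares_identity_general (h x) (h y)⟩
end

section
/- Let (Q,·,e) be a loop whose squares lie in two of the three nuclei: there are two distinct indices i,j ∈ {ℓ,m,r} with x·x ∈ Nuc_i(Q) ∩ Nuc_j(Q) for all x ∈ Q. Then the following are equivalent: (1) Q has the automorphic inverse property ((x·y)^r = x^r·y^r for all x,y); (2) the squaring map s : Q → Q, s(x) = x·x, is an endomorphism of (Q,·). Moreover, when these equivalent conditions hold, Q has central squares: x·x ∈ Z(Q) for all x ∈ Q. -/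
/-!
Each nucleus yields one identity that almost says `c ⬝ x = x ⬝ c`. Under the automorphic inverse
property these are `x ⬝ (c ⬝ xʳ) = c` for `c` left nuclear, `(x ⬝ c) ⬝ xʳ = c` for `c` right nuclear
and `(x ⬝ c) ⬝ xʳ = x ⬝ (c ⬝ xʳ)` for `c` middle nuclear; any two of them together force `c` to be
central. If squaring is an endomorphism, they are `x ⬝ (c ⬝ x) = (c ⬝ x) ⬝ x`,
`(x ⬝ c) ⬝ x = x ⬝ (x ⬝ c)` and `(x ⬝ c) ⬝ x = x ⬝ (c ⬝ x)`, where the left-right pair needs in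
addition that `c` commutes with squares. Either condition gives `x² ⬝ (xʳ)² = e`, hence
`x² ⬝ xʳ = x`. As squares are central, `(x² ⬝ y²) ⬝ (xʳ ⬝ yʳ) = x ⬝ y = (x ⬝ y)² ⬝ (x ⬝ y)ʳ`, and
cancellation identifies the two conditions.
-/

namespace LoopStr

variable {Q : Type*} (S : LoopStr Q)

local infixl:70 " ⬝ " => S.mul
local postfix:max "ˡ" => S.linv
local postfix:max "ʳ" => S.rinv

/-- The automorphic inverse property, for right inverses. -/
def AIP : Prop := ∀ x y : Q, (x ⬝ y)ʳ = xʳ ⬝ yʳ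

/-- The squaring map is an endomorphism of the loop. -/
def SqEndo : Prop := ∀ x y : Q, (x ⬝ y) ⬝ (x ⬝ y) = (x ⬝ x) ⬝ (y ⬝ y)

/-- The set of elements lying in at least two of the three nuclei; the pair of nuclei may depend on
the element. -/
def twoNuc : Set Q := S.lnuc ∩ S.mnuc ∪ (S.lnuc ∩ S.rnuc ∪ S.mnuc ∩ S.rnuc)

variable {a c d x y : Q}

lemma mul_left_cancel (h : a ⬝ x = a ⬝ y) : x = y := (S.leftPerm a).injective h

lemma mul_right_cancel (h : x ⬝ a = y ⬝ a) : x = y := (S.rightPerm a).injective h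

lemma rinv_injective : Function.Injective S.rinv :=
  Function.LeftInverse.injective S.linv_rinv

lemma linv_injective : Function.Injective S.linv :=
  Function.LeftInverse.injective S.rinv_linv

variable {S}

lemma mem_center_of_mem_commutant (hc : c ∈ S.commutant) (h : c ∈ S.twoNuc) : c ∈ S.center := by
  rcases h with ⟨hl, hm⟩ | ⟨hl, hr⟩ | ⟨hm, hr⟩
  · exact ⟨⟨⟨hc, hl⟩, hm⟩, fun x y => by rw [← hc, ← hl, hc x, hm, hc y]⟩
  · exact ⟨⟨⟨hc, hl⟩, fun x y => by rw [← hc, hl, hc, hr, hc y]⟩, hr⟩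
  · exact ⟨⟨⟨hc, fun x y => by rw [hc x, hm, hc y, ← hr, hc]⟩, hm⟩, hr⟩

lemma AIP.linv_mul (h : S.AIP) (x y : Q) : (x ⬝ y)ˡ = xˡ ⬝ yˡ :=
  S.rinv_injective (by rw [h, S.rinv_linv, S.rinv_linv, S.rinv_linv])

lemma AIP.mul_mul_rinv_of_mem_lnuc (h : S.AIP) (hc : c ∈ S.lnuc) (x : Q) :
    x ⬝ (c ⬝ xʳ) = c := by
  apply S.rinv_injective
  apply S.mul_left_cancel (a := c)
  calc c ⬝ (x ⬝ (c ⬝ xʳ))ʳ = c ⬝ (xʳ ⬝ (c ⬝ xʳ)ʳ) := by rw [h]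
    _ = (c ⬝ xʳ) ⬝ (c ⬝ xʳ)ʳ := (hc _ _).symm
    _ = c ⬝ cʳ := by rw [S.mul_rinv, S.mul_rinv]

lemma AIP.mul_mul_rinv_of_mem_rnuc (h : S.AIP) (hc : c ∈ S.rnuc) (x : Q) :
    (x ⬝ c) ⬝ xʳ = c := by
  apply S.linv_injective
  apply S.mul_right_cancel (a := c)
  calc ((x ⬝ c) ⬝ xʳ)ˡ ⬝ c = ((x ⬝ c)ˡ ⬝ x) ⬝ c := by rw [h.linv_mul, S.linv_rinv]
    _ = (x ⬝ c)ˡ ⬝ (x ⬝ c) := hc _ _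
    _ = cˡ ⬝ c := by rw [S.linv_mul, S.linv_mul]

lemma mul_mul_rinv_cancel_of_mem_lnuc (hc : c ∈ S.lnuc) (x : Q) : (c ⬝ x) ⬝ xʳ = c := by
  rw [hc, S.mul_rinv, S.mul_one]

theorem AIP.twoNuc_subset_center (h : S.AIP) : S.twoNuc ⊆ S.center := by
  refine fun c hc => mem_center_of_mem_commutant (fun x => ?_) hc
  rcases hc with ⟨hl, hm⟩ | ⟨hl, hr⟩ | ⟨hm, hr⟩
  · apply S.mul_right_cancel (a := xʳ)
    rw [mul_mul_rinv_cancel_of_mem_lnuc hl, hm, h.mul_mul_rinv_of_mem_lnuc hl]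
  · apply S.mul_right_cancel (a := xʳ)
    rw [mul_mul_rinv_cancel_of_mem_lnuc hl, h.mul_mul_rinv_of_mem_rnuc hr]
  · apply S.mul_left_cancel (a := xˡ)
    calc xˡ ⬝ (c ⬝ x) = (xˡ ⬝ c) ⬝ xˡʳ := by rw [← hm, S.rinv_linv]
      _ = c := h.mul_mul_rinv_of_mem_rnuc hr xˡ
      _ = xˡ ⬝ (x ⬝ c) := by rw [← hr, S.linv_mul, S.one_mul]

lemma SqEndo.mul_mul_self_of_mem_lnuc (h : S.SqEndo) (hc : c ∈ S.lnuc) (x : Q) :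
    x ⬝ (c ⬝ x) = (c ⬝ x) ⬝ x := by
  apply S.mul_left_cancel (a := c)
  calc c ⬝ (x ⬝ (c ⬝ x)) = (c ⬝ x) ⬝ (c ⬝ x) := (hc _ _).symm
    _ = (c ⬝ c) ⬝ (x ⬝ x) := h c x
    _ = c ⬝ ((c ⬝ x) ⬝ x) := by rw [hc, hc]

lemma SqEndo.mul_mul_self_of_mem_rnuc (h : S.SqEndo) (hc : c ∈ S.rnuc) (x : Q) :
    (x ⬝ c) ⬝ x = x ⬝ (x ⬝ c) := by
  apply S.mul_right_cancel (a := c)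
  calc ((x ⬝ c) ⬝ x) ⬝ c = (x ⬝ c) ⬝ (x ⬝ c) := hc _ _
    _ = (x ⬝ x) ⬝ (c ⬝ c) := h x c
    _ = (x ⬝ (x ⬝ c)) ⬝ c := by rw [← hc, hc x x]

lemma SqEndo.mul_comm_of_mem_lnuc (h : S.SqEndo) (hc : c ∈ S.lnuc) (hd : d ∈ S.lnuc) :
    c ⬝ d = d ⬝ c := by
  apply S.mul_right_cancel (a := d)
  rw [hd, h.mul_mul_self_of_mem_lnuc hc]

lemma SqEndo.mem_center_or_mem_lnuc_inter_rnuc (h : S.SqEndo) (hc : c ∈ S.twoNuc) :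
    c ∈ S.center ∨ c ∈ S.lnuc ∩ S.rnuc := by
  rcases hc with ⟨hl, hm⟩ | hlr | ⟨hm, hr⟩
  · refine .inl (mem_center_of_mem_commutant (fun x => ?_) (.inl ⟨hl, hm⟩))
    apply S.mul_right_cancel (a := x)
    rw [hm, h.mul_mul_self_of_mem_lnuc hl]
  · exact .inr hlr
  · refine .inl (mem_center_of_mem_commutant (fun x => ?_) (.inr (.inr ⟨hm, hr⟩)))
    apply S.mul_left_cancel (a := x)
    rw [← hm, h.mul_mul_self_of_mem_rnuc hr]

lemma SqEndo.mem_commutant_of_forall_sq_comm (h : S.SqEndo) (hl : c ∈ S.lnuc) (hr : c ∈ S.rnuc)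
    (hsq : ∀ x, c ⬝ (x ⬝ x) = (x ⬝ x) ⬝ c) : c ∈ S.commutant := fun x => by
  apply S.mul_right_cancel (a := x)
  rw [hl, hsq, hr, h.mul_mul_self_of_mem_rnuc hr]

theorem SqEndo.twoNuc_subset_center (h : S.SqEndo) (hsq : ∀ x, x ⬝ x ∈ S.twoNuc) :
    S.twoNuc ⊆ S.center := by
  intro c hc
  rcases h.mem_center_or_mem_lnuc_inter_rnuc hc with hcent | ⟨hl, hr⟩
  · exact hcent
  refine mem_center_of_mem_commutant (h.mem_commutant_of_forall_sq_comm hl hr fun x => ?_) hc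
  rcases h.mem_center_or_mem_lnuc_inter_rnuc (hsq x) with ⟨⟨⟨hxc, -⟩, -⟩, -⟩ | ⟨hxl, -⟩
  · exact (hxc c).symm
  · exact h.mul_comm_of_mem_lnuc hl hxl

lemma mul_mul_mul_comm_of_mem_lnuc_of_mem_center_s17 (hc : c ∈ S.lnuc) (hd : d ∈ S.center)
    (x y : Q) : (c ⬝ d) ⬝ (x ⬝ y) = (c ⬝ x) ⬝ (d ⬝ y) := by
  obtain ⟨⟨⟨hdc, hdl⟩, hdm⟩, -⟩ := hd
  rw [hc, hc, ← hdl, hdc, hdm]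

lemma sq_mul_rinv (hx : x ⬝ x ∈ S.lnuc) (h : (x ⬝ x) ⬝ (xʳ ⬝ xʳ) = S.e) :
    (x ⬝ x) ⬝ xʳ = x :=
  S.mul_right_cancel (a := xʳ) (by rw [hx, h, S.mul_rinv])

lemma aip_iff_sqEndo_of_sq_mul_rinv (hz : ∀ x, x ⬝ x ∈ S.center)
    (h : ∀ x, (x ⬝ x) ⬝ xʳ = x) : S.AIP ↔ S.SqEndo := by
  have sq_mul_sq_mul_rinv (x y : Q) :
      ((x ⬝ x) ⬝ (y ⬝ y)) ⬝ (xʳ ⬝ yʳ) = ((x ⬝ y) ⬝ (x ⬝ y)) ⬝ (x ⬝ y)ʳ := by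
    rw [mul_mul_mul_comm_of_mem_lnuc_of_mem_center_s17 (hz x).1.1.2 (hz y), h, h, h]
  constructor
  · intro ha x y
    apply S.mul_right_cancel (a := (x ⬝ y)ʳ)
    rw [← sq_mul_sq_mul_rinv, ha]
  · intro hs x y
    apply S.mul_left_cancel (a := (x ⬝ y) ⬝ (x ⬝ y))
    rw [← sq_mul_sq_mul_rinv, hs]

theorem aip_iff_sqEndo_of_sq_mem_center (hz : ∀ x, x ⬝ x ∈ S.center) : S.AIP ↔ S.SqEndo := by
  have of_sq_inv (hinv : ∀ x, (x ⬝ x) ⬝ (xʳ ⬝ xʳ) = S.e) : S.AIP ↔ S.SqEndo :=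
    aip_iff_sqEndo_of_sq_mul_rinv hz fun x => sq_mul_rinv (hz x).1.1.2 (hinv x)
  constructor
  · exact fun ha => (of_sq_inv fun x => by rw [← ha, S.mul_rinv]).mp ha
  · exact fun hs => (of_sq_inv fun x => by rw [← hs, S.mul_rinv, S.one_mul]).mpr hs

end LoopStr

theorem two_nuclei_aip_iff_sq_endo_general {Q : Type*} (S : LoopStr Q)
    (hsq : ∀ x : Q, S.mul x x ∈ S.twoNuc) :
    (S.AIP ↔ S.SqEndo) ∧ (S.AIP → ∀ x : Q, S.mul x x ∈ S.center) := by
  have aip_central (ha : S.AIP) (x : Q) : S.mul x x ∈ S.center :=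
    ha.twoNuc_subset_center (hsq x)
  have sqEndo_central (hs : S.SqEndo) (x : Q) : S.mul x x ∈ S.center :=
    hs.twoNuc_subset_center hsq (hsq x)
  refine ⟨⟨fun ha => ?_, fun hs => ?_⟩, aip_central⟩
  · exact (LoopStr.aip_iff_sqEndo_of_sq_mem_center (aip_central ha)).mp ha
  · exact (LoopStr.aip_iff_sqEndo_of_sq_mem_center (sqEndo_central hs)).mpr hs

/-- In a loop with squares in two of the three nuclei, the
automorphic inverse property is equivalent to the squaring map being an
endomorphism; and when these equivalent conditions hold, squares are central. -/
theorem two_nuclei_aip_iff_sq_endo {Q : Type*} (S : LoopStr Q)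
    (hsq : (∀ x : Q, S.mul x x ∈ S.lnuc ∩ S.mnuc) ∨
           (∀ x : Q, S.mul x x ∈ S.lnuc ∩ S.rnuc) ∨
           (∀ x : Q, S.mul x x ∈ S.mnuc ∩ S.rnuc)) :
    ((∀ x y : Q, S.rinv (S.mul x y) = S.mul (S.rinv x) (S.rinv y)) ↔
      (∀ x y : Q, S.mul (S.mul x y) (S.mul x y) = S.mul (S.mul x x) (S.mul y y))) ∧
    ((∀ x y : Q, S.rinv (S.mul x y) = S.mul (S.rinv x) (S.rinv y)) →
      ∀ x : Q, S.mul x x ∈ S.center) :=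
  two_nuclei_aip_iff_sq_endo_general S fun x => hsq.imp (· x) (Or.imp (· x) (· x))
end

section
/- Let (Q,·,e) be a torsion loop in which squaring is a centralizing endomorphism: x·x ∈ Z(Q) for all x, the map s(x) = x·x is an endomorphism of (Q,·), and every element has finite order (powers defined by x^n = L_x^n(e), which is unambiguous since Q is power-associative). Let E = {a ∈ Q : a^{2^n} = e for some n ≥ 0} and O = {a ∈ Q : a has finite odd order}. Then E and O are normal subloops of Q, E ∩ O = {e}, Q = E·O, and the map E × O → Q, (b,c) ↦ b·c, is an isomorphism of loops from the direct product E × O onto Q. -/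
/-!
This is the Fitting decomposition of the squaring endomorphism `s`. Since squares are central,
`a^(2^n) = s^n(a)`, so `E` consists of the elements killed by some iterate of `s`. Since `d` is odd
exactly when `2^n ≡ 1 (mod d)` for some `n > 0`, `O` consists of the periodic points of `s`; these
are values of `s`, hence central. In a torsion loop every orbit of `s` is eventually periodic, so
for each `q` some iterate `c = s^N(q)` satisfies `s^N(c) = c`, and `q = (q / c) · c` is the required
factorization.
-/

lemma image_preimage_singleton_of_semiconj {α β : Type*} {f : α → β} {φ : α → α} {ψ : β → β}
    (hφ : φ.Surjective) (hψ : ψ.Injective) (h : Function.Semiconj f φ ψ) (r : β) :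
    φ '' (f ⁻¹' {r}) = f ⁻¹' {ψ r} := by
  have hpre : f ⁻¹' {r} = φ ⁻¹' (f ⁻¹' {ψ r}) := by
    ext a
    simp only [Set.mem_preimage, Set.mem_singleton_iff, h.eq, hψ.eq_iff]
  rw [hpre, Set.image_preimage_eq _ hφ]

lemma odd_iff_exists_two_pow_modEq_one {d : ℕ} : Odd d ↔ ∃ n > 0, 2 ^ n ≡ 1 [MOD d] := by
  constructor
  · intro hd
    exact ⟨d.totient, Nat.totient_pos.2 hd.pos, Nat.ModEq.pow_totient (Nat.coprime_two_left.2 hd)⟩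
  · rintro ⟨n, hn, h⟩
    have hcop : Nat.Coprime (2 ^ n) d := h.gcd_eq.trans d.gcd_one_left
    exact Nat.coprime_two_left.1 ((Nat.coprime_pow_left_iff hn 2 d).1 hcop)

lemma exists_lt_pow_modEq_pow (b : ℕ) {d : ℕ} (hd : 0 < d) :
    ∃ i j, i < j ∧ b ^ i ≡ b ^ j [MOD d] := by
  obtain ⟨i, -, j, -, hij, h⟩ := Set.infinite_univ.exists_lt_map_eq_of_mapsTo
    (f := fun n => b ^ n % d) (fun n _ => Nat.mod_lt (b ^ n) hd) (Set.finite_Iio d)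
  exact ⟨i, j, hij, h⟩

namespace LoopStr

variable {Q R : Type*} {S : LoopStr Q} {T : LoopStr R}

lemma mul_left_cancel_s18 {a b c : Q} (h : S.mul a b = S.mul a c) : b = c :=
  (S.leftPerm a).injective h

lemma mul_right_cancel_s18 {a b c : Q} (h : S.mul b a = S.mul c a) : b = c :=
  (S.rightPerm a).injective h

lemma ldiv_self (a : Q) : S.ldiv a a = S.e := by
  simpa only [S.mul_one] using S.ldiv_mul a S.e

lemma rdiv_self (a : Q) : S.rdiv a a = S.e := by
  simpa only [S.one_mul] using S.mul_rdiv a S.e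

/-! ### Homomorphisms -/

variable (S T) in
/-- Homomorphisms of loops. Preservation of `e` and of both divisions follows from that of the
multiplication. -/
def IsHom (f : Q → R) : Prop := ∀ x y, f (S.mul x y) = T.mul (f x) (f y)

namespace IsHom

variable {f g : Q → R}

lemma map_e (hf : IsHom S T f) : f S.e = T.e :=
  mul_left_cancel_s18 (S := T) (a := f S.e) (by rw [← hf, S.mul_one, T.mul_one])

lemma map_ldiv (hf : IsHom S T f) (a b : Q) : f (S.ldiv a b) = T.ldiv (f a) (f b) :=
  mul_left_cancel_s18 (S := T) (a := f a) (by rw [← hf, S.mul_ldiv, T.mul_ldiv])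

lemma map_rdiv (hf : IsHom S T f) (a b : Q) : f (S.rdiv a b) = T.rdiv (f a) (f b) :=
  mul_right_cancel_s18 (S := T) (a := f b) (by rw [← hf, S.rdiv_mul, T.rdiv_mul])

lemma id : IsHom S S id := fun _ _ => rfl

lemma const_e : IsHom S T (fun _ => T.e) := fun _ _ => (T.one_mul T.e).symm

lemma iterate {f : Q → Q} (hf : IsHom S S f) (n : ℕ) : IsHom S S f^[n] :=
  Function.Semiconj₂.iterate hf n

lemma isSubloop_eqLocus (hf : IsHom S T f) (hg : IsHom S T g) :
    S.IsSubloop {a | f a = g a} := by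
  refine ⟨hf.map_e.trans hg.map_e.symm, ?_, ?_, ?_⟩ <;>
    intro a (ha : f a = g a) b (hb : f b = g b)
  · exact show f _ = g _ by rw [hf, hg, ha, hb]
  · exact show f _ = g _ by rw [hf.map_ldiv, hg.map_ldiv, ha, hb]
  · exact show f _ = g _ by rw [hf.map_rdiv, hg.map_rdiv, ha, hb]

lemma image_mul_left_preimage_singleton (hf : IsHom S T f) (x : Q) (r : R) :
    (S.mul x ·) '' (f ⁻¹' {r}) = f ⁻¹' {T.mul (f x) r} :=
  image_preimage_singleton_of_semiconj (S.leftPerm x).surjective (T.leftPerm (f x)).injective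
    (hf x) r

lemma image_mul_right_preimage_singleton (hf : IsHom S T f) (x : Q) (r : R) :
    (S.mul · x) '' (f ⁻¹' {r}) = f ⁻¹' {T.mul r (f x)} :=
  image_preimage_singleton_of_semiconj (S.rightPerm x).surjective (T.rightPerm (f x)).injective
    (fun a => hf a x) r

-- Each of the sets compared in the definition of normality is a fibre of `f`.
lemma isNormalSubloop_preimage_e (hf : IsHom S T f) : S.IsNormalSubloop (f ⁻¹' {T.e}) := by
  have left := hf.image_mul_left_preimage_singleton
  have right := hf.image_mul_right_preimage_singleton
  refine ⟨hf.isSubloop_eqLocus const_e, fun x => ?_, fun x y => ?_, fun x y => ?_⟩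
  · rw [left, right, T.mul_one, T.one_mul]
  · rw [← Set.image_image (S.mul · y) (S.mul x ·), ← Set.image_image (S.mul x ·) (S.mul · y),
      left, right, right, left, T.mul_one, T.one_mul]
  · rw [← Set.image_image (S.mul · y) (S.mul · x), right, right, right, T.one_mul, T.one_mul, hf]

end IsHom

lemma isSubloop_iUnion_of_directed {ι : Type*} [Nonempty ι] {K : ι → Set Q}
    (hK : ∀ i, S.IsSubloop (K i)) (hdir : Directed (· ⊆ ·) K) : S.IsSubloop (⋃ i, K i) := by
  have closed {op : Q → Q → Q} (hop : ∀ i, ∀ a ∈ K i, ∀ b ∈ K i, op a b ∈ K i) :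
      ∀ a ∈ ⋃ i, K i, ∀ b ∈ ⋃ i, K i, op a b ∈ ⋃ i, K i := by
    intro a ha b hb
    obtain ⟨i, hi⟩ := Set.mem_iUnion.1 ha
    obtain ⟨j, hj⟩ := Set.mem_iUnion.1 hb
    obtain ⟨k, hik, hjk⟩ := hdir i j
    exact Set.mem_iUnion_of_mem k (hop k a (hik hi) b (hjk hj))
  exact ⟨Set.mem_iUnion_of_mem (Classical.arbitrary ι) (hK _).1, closed fun i => (hK i).2.1,
    closed fun i => (hK i).2.2.1, closed fun i => (hK i).2.2.2⟩

lemma isNormalSubloop_iUnion_of_directed {ι : Type*} [Nonempty ι] {K : ι → Set Q}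
    (hK : ∀ i, S.IsNormalSubloop (K i)) (hdir : Directed (· ⊆ ·) K) :
    S.IsNormalSubloop (⋃ i, K i) := by
  refine ⟨isSubloop_iUnion_of_directed (fun i => (hK i).1) hdir, fun x => ?_, fun x y => ?_,
    fun x y => ?_⟩ <;>
    simp only [Set.image_iUnion]
  · exact Set.iUnion_congr fun i => (hK i).2.1 x
  · exact Set.iUnion_congr fun i => (hK i).2.2.1 x y
  · exact Set.iUnion_congr fun i => (hK i).2.2.2 x y

/-! ### Internal direct products -/

variable (S) in
/-- `Q` is the internal direct product of its normal subloops `A` and `B`: multiplication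
`A × B → Q` is an isomorphism of loops. -/
def IsInternalProduct (A B : Set Q) : Prop :=
  S.IsNormalSubloop A ∧ S.IsNormalSubloop B ∧
  A ∩ B = {S.e} ∧
  (∀ q : Q, ∃ b ∈ A, ∃ c ∈ B, S.mul b c = q) ∧
  (∀ b₁ ∈ A, ∀ b₂ ∈ A, ∀ c₁ ∈ B, ∀ c₂ ∈ B,
    S.mul (S.mul b₁ c₁) (S.mul b₂ c₂) = S.mul (S.mul b₁ b₂) (S.mul c₁ c₂)) ∧
  Function.Bijective (fun p : A × B => S.mul p.1.1 p.2.1)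

lemma isNormalSubloop_of_subset_center {N : Set Q} (hN : S.IsSubloop N) (hc : N ⊆ S.center) :
    S.IsNormalSubloop N :=
  ⟨hN, fun x => Set.image_congr fun _ ha => ((hc ha).1.1.1 x).symm,
    fun x y => Set.image_congr fun _ ha => (hc ha).1.2 x y,
    fun x y => Set.image_congr fun _ ha => ((hc ha).1.1.2 x y).symm⟩

lemma mul_mem_rnuc {a b : Q} (ha : a ∈ S.rnuc) (hb : b ∈ S.rnuc) : S.mul a b ∈ S.rnuc := by
  intro x y
  rw [← hb, ha, hb, hb]

lemma mul_mul_mul_comm_of_mem_center {c₁ c₂ : Q} (h₁ : c₁ ∈ S.center) (h₂ : c₂ ∈ S.rnuc)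
    (b₁ b₂ : Q) :
    S.mul (S.mul b₁ c₁) (S.mul b₂ c₂) = S.mul (S.mul b₁ b₂) (S.mul c₁ c₂) := by
  obtain ⟨⟨⟨comm, left⟩, middle⟩, right⟩ := h₁
  calc S.mul (S.mul b₁ c₁) (S.mul b₂ c₂)
      = S.mul b₁ (S.mul (S.mul c₁ b₂) c₂) := by rw [middle, left]
    _ = S.mul b₁ (S.mul b₂ (S.mul c₁ c₂)) := by rw [comm, middle]
    _ = S.mul (S.mul b₁ b₂) (S.mul c₁ c₂) := (mul_mem_rnuc right h₂ b₁ b₂).symm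

lemma eq_and_eq_of_mul_eq_mul {A B : Set Q} (hA : S.IsSubloop A) (hB : S.IsSubloop B)
    (hBr : B ⊆ S.rnuc) (hAB : A ∩ B ⊆ {S.e}) {b₁ b₂ c₁ c₂ : Q} (hb₁ : b₁ ∈ A) (hb₂ : b₂ ∈ A)
    (hc₁ : c₁ ∈ B) (hc₂ : c₂ ∈ B) (h : S.mul b₁ c₁ = S.mul b₂ c₂) : b₁ = b₂ ∧ c₁ = c₂ := by
  have hb : b₁ = S.mul b₂ (S.rdiv c₂ c₁) :=
    mul_right_cancel_s18 (S := S) (a := c₁) (by rw [hBr hc₁, S.rdiv_mul, h])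
  have hdiv : S.ldiv b₂ b₁ = S.rdiv c₂ c₁ := by rw [hb, S.ldiv_mul]
  have he : S.rdiv c₂ c₁ = S.e :=
    hAB ⟨hdiv ▸ hA.2.2.1 b₂ hb₂ b₁ hb₁, hB.2.2.2 c₂ hc₂ c₁ hc₁⟩
  exact ⟨by rw [hb, he, S.mul_one], by rw [← S.rdiv_mul c₁ c₂, he, S.one_mul]⟩

lemma isInternalProduct_of_subset_center {A B : Set Q} (hA : S.IsNormalSubloop A)
    (hB : S.IsSubloop B) (hBc : B ⊆ S.center) (hAB : A ∩ B ⊆ {S.e})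
    (hspan : ∀ q : Q, ∃ b ∈ A, ∃ c ∈ B, S.mul b c = q) : S.IsInternalProduct A B := by
  refine ⟨hA, isNormalSubloop_of_subset_center hB hBc,
    hAB.antisymm (Set.singleton_subset_iff.2 ⟨hA.1.1, hB.1⟩), hspan,
    fun b₁ _ b₂ _ c₁ h₁ c₂ h₂ => mul_mul_mul_comm_of_mem_center (hBc h₁) (hBc h₂).2 b₁ b₂,
    ?_, fun q => ?_⟩
  · rintro ⟨⟨b₁, hb₁⟩, ⟨c₁, hc₁⟩⟩ ⟨⟨b₂, hb₂⟩, ⟨c₂, hc₂⟩⟩ h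
    obtain ⟨rfl, rfl⟩ := eq_and_eq_of_mul_eq_mul hA.1 hB (fun _ hc => (hBc hc).2) hAB
      hb₁ hb₂ hc₁ hc₂ h
    rfl
  · obtain ⟨b, hb, c, hc, h⟩ := hspan q
    exact ⟨(⟨b, hb⟩, ⟨c, hc⟩), h⟩

/-! ### The Fitting decomposition of an endomorphism -/

variable (S) in
/-- The Fitting null component of `f`: the elements killed by some iterate of `f`. -/
def iterKer (f : Q → Q) : Set Q := ⋃ n, f^[n] ⁻¹' {S.e}

lemma mem_iterKer {f : Q → Q} {a : Q} : a ∈ S.iterKer f ↔ ∃ n, f^[n] a = S.e := by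
  simp only [iterKer, Set.mem_iUnion, Set.mem_preimage, Set.mem_singleton_iff]

namespace IsHom

variable {f : Q → Q}

lemma monotone_preimage_iterate_e (hf : IsHom S S f) : Monotone fun n => f^[n] ⁻¹' {S.e} := by
  refine monotone_nat_of_le_succ fun n a (ha : f^[n] a = S.e) => ?_
  rw [Set.mem_preimage, Function.iterate_succ_apply', ha, hf.map_e, Set.mem_singleton_iff]

lemma isNormalSubloop_iterKer (hf : IsHom S S f) : S.IsNormalSubloop (S.iterKer f) :=
  isNormalSubloop_iUnion_of_directed (fun n => (hf.iterate n).isNormalSubloop_preimage_e)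
    hf.monotone_preimage_iterate_e.directed_le

lemma isSubloop_periodicPts (hf : IsHom S S f) : S.IsSubloop (Function.periodicPts f) := by
  rw [← Function.iUnion_pnat_ptsOfPeriod]
  exact isSubloop_iUnion_of_directed (fun n => (hf.iterate n).isSubloop_eqLocus IsHom.id)
    (Function.directed_ptsOfPeriod_pnat f)

lemma iterKer_inter_periodicPts_subset (hf : IsHom S S f) :
    S.iterKer f ∩ Function.periodicPts f ⊆ {S.e} := by
  rintro a ⟨hker, hper⟩
  obtain ⟨n, hn⟩ := mem_iterKer.1 hker
  have hfix : f a = a := Function.isPeriodicPt_of_mem_periodicPts_of_isPeriodicPt_iterate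
    (m := 1) hper (hn ▸ hf.map_e)
  exact (Function.iterate_fixed hfix n).symm.trans hn

lemma exists_mul_eq_of_iterate_mem_periodicPts (hf : IsHom S S f) {q : Q} {n : ℕ}
    (hq : f^[n] q ∈ Function.periodicPts f) :
    ∃ b ∈ S.iterKer f, ∃ c ∈ Function.periodicPts f, S.mul b c = q := by
  obtain ⟨m, hm, hper⟩ := hq
  have hperN : Function.IsPeriodicPt f m (f^[n * m] q) := by
    rw [← Nat.sub_add_cancel (Nat.le_mul_of_pos_right n hm), Function.iterate_add_apply]
    exact hper.apply_iterate _
  set N := n * m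
  have hidem : f^[N] (f^[N] q) = f^[N] q := hperN.const_mul n
  have hker : f^[N] (S.rdiv q (f^[N] q)) = S.e := by
    rw [(hf.iterate N).map_rdiv, hidem, rdiv_self]
  exact ⟨_, mem_iterKer.2 ⟨N, hker⟩, _, ⟨m, hm, hperN⟩, S.rdiv_mul _ _⟩

theorem isInternalProduct_iterKer_periodicPts (hf : IsHom S S f)
    (hcenter : Set.range f ⊆ S.center) (hper : ∀ q, ∃ n, f^[n] q ∈ Function.periodicPts f) :
    S.IsInternalProduct (S.iterKer f) (Function.periodicPts f) :=
  isInternalProduct_of_subset_center hf.isNormalSubloop_iterKer hf.isSubloop_periodicPts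
    (Function.periodicPts_subset_range.trans hcenter) hf.iterKer_inter_periodicPts_subset
    fun q => (hper q).elim fun _ => hf.exists_mul_eq_of_iterate_mem_periodicPts

end IsHom

/-! ### Powers and squaring -/

variable (S) in
/-- The squaring map, whose iterates give the powers `a^(2^n)`. -/
def square (x : Q) : Q := S.mul x x

lemma npow_succ (a : Q) (n : ℕ) : S.npow a (n + 1) = S.mul a (S.npow a n) := by
  simp only [npow, pow_succ', Equiv.Perm.mul_apply, leftPerm, Equiv.coe_fn_mk]

lemma npow_one (a : Q) : S.npow a 1 = a := S.mul_one a

lemma lorder_eq_period (a : Q) : S.lorder a = MulAction.period (S.leftPerm a) S.e := by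
  have hdvd (n : ℕ) : S.npow a n = S.e ↔ MulAction.period (S.leftPerm a) S.e ∣ n :=
    MulAction.pow_smul_eq_iff_period_dvd (m := S.leftPerm a) (a := S.e)
  simp only [lorder, hdvd]
  rcases (MulAction.period (S.leftPerm a) S.e).eq_zero_or_pos with h | h
  · have hempty : {n | 0 < n ∧ MulAction.period (S.leftPerm a) S.e ∣ n} = ∅ :=
      Set.eq_empty_of_forall_notMem fun n hn => hn.1.ne' (Nat.eq_zero_of_zero_dvd (h ▸ hn.2))
    rw [hempty, Nat.sInf_empty, h]
  · exact IsLeast.csInf_eq ⟨⟨h, dvd_rfl⟩, fun n hn => Nat.le_of_dvd hn.1 hn.2⟩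

lemma npow_eq_npow_iff_modEq {a : Q} {m n : ℕ} :
    S.npow a m = S.npow a n ↔ m ≡ n [MOD S.lorder a] := by
  rw [Nat.ModEq.comm, Nat.modEq_iff_dvd, lorder_eq_period, ← MulAction.zpow_smul_eq_iff_period_dvd,
    sub_eq_neg_add, zpow_add, mul_smul, zpow_neg, inv_smul_eq_iff, zpow_natCast, zpow_natCast]
  rfl

lemma npow_mem_rnuc {a : Q} (ha : a ∈ S.rnuc) (n : ℕ) : S.npow a n ∈ S.rnuc := by
  induction n with
  | zero => exact fun x y => by simp only [npow, pow_zero, Equiv.Perm.one_apply, S.mul_one]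
  | succ n ih => exact npow_succ (S := S) a n ▸ mul_mem_rnuc ha ih

lemma npow_two_mul {a : Q} (ha : S.square a ∈ S.rnuc) (n : ℕ) :
    S.npow a (2 * n) = S.npow (S.square a) n := by
  induction n with
  | zero => rfl
  | succ n ih =>
    calc S.npow a (2 * (n + 1))
        = S.mul a (S.mul a (S.npow (S.square a) n)) := by
          rw [Nat.mul_succ, npow_succ, npow_succ, ih]
      _ = S.mul (S.square a) (S.npow (S.square a) n) := (npow_mem_rnuc ha n a a).symm
      _ = S.npow (S.square a) (n + 1) := (npow_succ _ n).symm

lemma npow_two_pow (hr : ∀ x, S.square x ∈ S.rnuc) (a : Q) (n : ℕ) :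
    S.npow a (2 ^ n) = S.square^[n] a := by
  induction n generalizing a with
  | zero => exact npow_one a
  | succ n ih => rw [pow_succ', npow_two_mul (hr a), ih, Function.iterate_succ_apply]

lemma setOf_npow_two_pow_eq_e (hr : ∀ x, S.square x ∈ S.rnuc) :
    {a | ∃ n, S.npow a (2 ^ n) = S.e} = S.iterKer S.square := by
  ext a
  calc (∃ n, S.npow a (2 ^ n) = S.e)
      ↔ ∃ n, S.square^[n] a = S.e := by simp only [npow_two_pow hr]
    _ ↔ a ∈ S.iterKer S.square := mem_iterKer.symm

lemma setOf_odd_lorder (hr : ∀ x, S.square x ∈ S.rnuc) :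
    {a | Odd (S.lorder a)} = Function.periodicPts S.square := by
  ext a
  calc Odd (S.lorder a)
      ↔ ∃ n > 0, 2 ^ n ≡ 1 [MOD S.lorder a] := odd_iff_exists_two_pow_modEq_one
    _ ↔ ∃ n > 0, S.square^[n] a = a := by
      simp only [← npow_eq_npow_iff_modEq, npow_two_pow hr, npow_one]

lemma exists_iterate_square_mem_periodicPts (hr : ∀ x, S.square x ∈ S.rnuc) {a : Q}
    (ha : ∃ d, 0 < d ∧ S.npow a d = S.e) :
    ∃ n, S.square^[n] a ∈ Function.periodicPts S.square := by
  obtain ⟨d, hd, hda⟩ := ha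
  have hlorder : S.lorder a ∣ d := Nat.modEq_zero_iff_dvd.1 (npow_eq_npow_iff_modEq.1 hda)
  obtain ⟨i, j, hij, h⟩ := exists_lt_pow_modEq_pow 2 (Nat.pos_of_dvd_of_pos hlorder hd)
  rw [← npow_eq_npow_iff_modEq, npow_two_pow hr, npow_two_pow hr] at h
  refine ⟨i, j - i, Nat.sub_pos_of_lt hij, ?_⟩
  rw [Function.IsPeriodicPt, Function.IsFixedPt, ← Function.iterate_add_apply,
    Nat.sub_add_cancel hij.le, h]

end LoopStr

/-- Decomposition theorem. Let `Q` be a torsion loop in which squaring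
is a centralizing endomorphism, `E = {a : a^{2^n} = e for some n}` and
`O = {a : a has finite odd order}`. Then `E` and `O` are normal subloops,
`E ∩ O = {e}`, `Q = E·O`, and `(b,c) ↦ b·c` is an isomorphism of loops from the
direct product `E × O` onto `Q`. -/
theorem torsion_decomposition {Q : Type*} (S : LoopStr Q)
    (hZ : ∀ x : Q, S.mul x x ∈ S.center)
    (hEndo : ∀ x y : Q, S.mul (S.mul x y) (S.mul x y) = S.mul (S.mul x x) (S.mul y y))
    (hTor : ∀ x : Q, ∃ n : ℕ, 0 < n ∧ S.npow x n = S.e)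
    (E O : Set Q)
    (hE : E = {a : Q | ∃ n : ℕ, S.npow a (2 ^ n) = S.e})
    (hO : O = {a : Q | Odd (S.lorder a)}) :
    S.IsNormalSubloop E ∧ S.IsNormalSubloop O ∧
    E ∩ O = {S.e} ∧
    (∀ q : Q, ∃ b ∈ E, ∃ c ∈ O, S.mul b c = q) ∧
    (∀ b₁ ∈ E, ∀ b₂ ∈ E, ∀ c₁ ∈ O, ∀ c₂ ∈ O,
      S.mul (S.mul b₁ c₁) (S.mul b₂ c₂) = S.mul (S.mul b₁ b₂) (S.mul c₁ c₂)) ∧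
    Function.Bijective (fun p : E × O => S.mul p.1.1 p.2.1) := by
  have hr (x : Q) : S.square x ∈ S.rnuc := (hZ x).2
  have hs : S.IsHom S S.square := hEndo
  have hE' : E = S.iterKer S.square := hE.trans (LoopStr.setOf_npow_two_pow_eq_e hr)
  have hO' : O = Function.periodicPts S.square := hO.trans (LoopStr.setOf_odd_lorder hr)
  have hper (q : Q) : ∃ n, S.square^[n] q ∈ Function.periodicPts S.square :=
    LoopStr.exists_iterate_square_mem_periodicPts hr (hTor q)
  rw [hE', hO']
  exact hs.isInternalProduct_iterKer_periodicPts (Set.range_subset_iff.2 hZ) hper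
end
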